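/- arXiv:2103.16253 — 3 statements merged into one kernel-verified Lean document; each statement's English description precedes it below -/
import Mathlib

section
/- Let H : ℝ^d → Set(ℝ^d) be a set-valued map such that (i) for every x ∈ ℝ^d, H(x) is nonempty, convex and compact, (ii) there is a constant C ≥ 0 with sup{‖v‖ : v ∈ H(x)} ≤ C(1 + ‖x‖) for all x, and (iii) H is upper semicontinuous at every point. Then for every x₀ ∈ ℝ^d there exists an absolutely continuous curve x : ℝ₊ → ℝ^d with x(0) = x₀ which is a solution of the differential inclusion ẋ(t) ∈ H(x(t)). -/
open MeasureTheory Filter Set RealInnerProductSpace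

noncomputable section

/-- `ℝ^d` with the Euclidean structure. -/
abbrev Ed (d : ℕ) := EuclideanSpace ℝ (Fin d)

/-- An absolutely continuous curve `x : ℝ₊ → ℝ^d` which is a solution of the differential
inclusion `ẋ(t) ∈ H(x(t))`: `x(t) = x(0) + ∫₀ᵗ u` with `u` locally integrable and
`u(t) ∈ H(x(t))` for almost every `t ≥ 0`. -/
def IsSolutionOn {d : ℕ} (H : Ed d → Set (Ed d)) (x : ℝ → Ed d) : Prop :=
  ∃ u : ℝ → Ed d, LocallyIntegrableOn u (Ici (0:ℝ)) ∧
    (∀ t ∈ Ici (0:ℝ), x t = x 0 + ∫ s in (0:ℝ)..t, u s) ∧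
    (∀ᵐ t ∂(volume.restrict (Ici (0:ℝ))), u t ∈ H (x t))

/-- The set-valued map `H` is upper semicontinuous at `x`: for every open neighborhood `U`
of `H(x)` there is `δ > 0` such that `‖y − x‖ ≤ δ` implies `H(y) ⊆ U`. -/
def USCMapAt {d : ℕ} (H : Ed d → Set (Ed d)) (x : Ed d) : Prop :=
  ∀ U : Set (Ed d), IsOpen U → H x ⊆ U → ∃ δ > (0:ℝ), ∀ y : Ed d, ‖y - x‖ ≤ δ → H y ⊆ U


open Topology NNReal

theorem ftc_lip {d : ℕ} (x : ℝ → Ed d)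
    (hx : ∀ T : ℝ, ∃ K : ℝ≥0, LipschitzOnWith K x (Icc 0 T)) :
    LocallyIntegrableOn (deriv x) (Ici (0:ℝ)) ∧
    (∀ t ∈ Ici (0:ℝ), x t = x 0 + ∫ s in (0:ℝ)..t, deriv x s) ∧
    (∀ᵐ t ∂(volume.restrict (Ici (0:ℝ))), 0 < t ∧ DifferentiableAt ℝ x t) := by
  have hdiff : ∀ᵐ t ∂(volume : Measure ℝ), 0 < t → DifferentiableAt ℝ x t := by
    have h1 : ∀ n : ℕ, ∀ᵐ t ∂(volume : Measure ℝ), t ∈ Icc (0:ℝ) n →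
        DifferentiableWithinAt ℝ x (Icc (0:ℝ) n) t := by
      intro n
      obtain ⟨K, hK⟩ := hx n
      exact hK.ae_differentiableWithinAt_of_mem_real
    filter_upwards [ae_all_iff.2 h1] with t ht h0
    obtain ⟨n, hn⟩ := exists_nat_gt t
    exact (ht n ⟨h0.le, hn.le⟩).differentiableAt (Icc_mem_nhds h0 hn)
  have hint : ∀ T : ℝ, IntegrableOn (deriv x) (Icc 0 T) := by
    intro T
    obtain ⟨K, hK⟩ := hx (T + 1)
    refine Measure.integrableOn_of_bounded (M := K) (by simp)
      (stronglyMeasurable_deriv x).aestronglyMeasurable ?_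
    rw [ae_restrict_iff' measurableSet_Icc]
    have h0 : ∀ᵐ t ∂(volume : Measure ℝ), t ≠ 0 := by simp [ae_iff, measure_singleton]
    filter_upwards [h0] with t ht0 ht
    have : 0 < t := lt_of_le_of_ne ht.1 (Ne.symm ht0)
    exact norm_deriv_le_of_lipschitzOn (Icc_mem_nhds this (by linarith [ht.2])) hK
  refine ⟨?_, ?_, ?_⟩
  · rw [locallyIntegrableOn_iff isClosed_Ici.isLocallyClosed]
    intro k hk hkc
    obtain ⟨T, hT⟩ := hkc.bddAbove
    exact (hint T).mono_set fun t ht => ⟨hk ht, hT ht⟩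
  · intro t ht
    have ht : 0 ≤ t := ht
    obtain ⟨K, hK⟩ := hx t
    have hii : IntervalIntegrable (deriv x) volume 0 t :=
      (intervalIntegrable_iff_integrableOn_Icc_of_le ht).2 (hint t)
    ext i
    let L : Ed d →L[ℝ] ℝ := EuclideanSpace.proj i
    have hL : ∀ v : Ed d, L v = v i := fun v => rfl
    have e1 := L.intervalIntegral_comp_comm hii
    have hac : AbsolutelyContinuousOnInterval (fun s => L (x s)) 0 t := by
      have := L.lipschitz.comp_lipschitzOnWith hK
      rw [← uIcc_of_le ht] at this
      exact this.absolutelyContinuousOnInterval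
    have e2 := hac.integral_deriv_eq_sub
    have e3 : ∫ s in (0:ℝ)..t, deriv (fun s => L (x s)) s = ∫ s in (0:ℝ)..t, L (deriv x s) := by
      apply intervalIntegral.integral_congr_ae
      filter_upwards [hdiff] with s hs hsm
      rw [uIoc_of_le ht] at hsm
      exact (L.hasFDerivAt.comp_hasDerivAt s (hs hsm.1).hasDerivAt).deriv
    have : L (∫ s in (0:ℝ)..t, deriv x s) = L (x t) - L (x 0) := by
      rw [← e1, ← e3, e2]
    simp only [hL] at this
    simp [this]
  · rw [ae_restrict_iff' measurableSet_Ici]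
    have h0 : ∀ᵐ t ∂(volume : Measure ℝ), t ≠ 0 := by simp [ae_iff, measure_singleton]
    filter_upwards [h0, hdiff] with t ht0 hd ht
    have : 0 < t := lt_of_le_of_ne ht (Ne.symm ht0)
    exact ⟨this, hd this⟩

section euler
variable {E : Type*} [NormedAddCommGroup E] [NormedSpace ℝ E]

theorem euler_bound {f : E → E} {C h : ℝ} (hC : 0 ≤ C) (hh : 0 ≤ h)
    (hf : ∀ v, ‖f v‖ ≤ C * (1 + ‖v‖)) {y : ℕ → E} (hy : ∀ k, y (k+1) = y k + h • f (y k)) (k : ℕ) :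
    1 + ‖y k‖ ≤ Real.exp (C * (k * h)) * (1 + ‖y 0‖) := by
  induction k with
  | zero => simp
  | succ k ih =>
    have h1 : ‖y (k+1)‖ ≤ ‖y k‖ + h * (C * (1 + ‖y k‖)) := by
      rw [hy]
      refine (norm_add_le _ _).trans ?_
      rw [norm_smul, Real.norm_of_nonneg hh]
      gcongr
      exact hf _
    have h2 : Real.exp (C * ((k+1 : ℕ) * h)) = Real.exp (C * h) * Real.exp (C * (k * h)) := by
      rw [← Real.exp_add]; push_cast; ring_nf
    have h3 := Real.add_one_le_exp (C * h)
    calc 1 + ‖y (k+1)‖ ≤ (C * h + 1) * (1 + ‖y k‖) := by linarith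
      _ ≤ Real.exp (C * h) * (Real.exp (C * (k * h)) * (1 + ‖y 0‖)) := by gcongr
      _ = _ := by rw [h2]; ring

theorem euler_lip {f : E → E} {C h T : ℝ} (hC : 0 ≤ C) (hh : 0 ≤ h)
    (hf : ∀ v, ‖f v‖ ≤ C * (1 + ‖v‖)) {y : ℕ → E} (hy : ∀ k, y (k+1) = y k + h • f (y k))
    (j k : ℕ) (hjk : j ≤ k) (hk : k * h ≤ T) :
    ‖y k - y j‖ ≤ C * (Real.exp (C * T) * (1 + ‖y 0‖)) * (k * h - j * h) := by
  induction k, hjk using Nat.le_induction with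
  | base => simp
  | succ k hjk ih =>
    push_cast at hk ⊢
    have hk' : k * h ≤ T := by linarith
    have h1 := ih hk'
    have h2 : ‖f (y k)‖ ≤ C * (Real.exp (C * T) * (1 + ‖y 0‖)) := by
      refine (hf _).trans ?_
      gcongr
      refine (euler_bound hC hh hf hy k).trans ?_
      gcongr
    have h3 : y (k+1) - y j = (y k - y j) + h • f (y k) := by rw [hy]; abel
    rw [h3]
    refine (norm_add_le _ _).trans ?_
    rw [norm_smul, Real.norm_of_nonneg hh]
    have := mul_le_mul_of_nonneg_left h2 hh
    linarith

theorem euler_avg {f : E → E} {h : ℝ} (hh : 0 < h) {y : ℕ → E}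
    (hy : ∀ k, y (k+1) = y k + h • f (y k)) {K : Set E} (hK : Convex ℝ K)
    (j k : ℕ) (hjk : j < k) (hm : ∀ i, j ≤ i → i < k → f (y i) ∈ K) :
    (k * h - j * h)⁻¹ • (y k - y j) ∈ K := by
  have e : ∀ k, j ≤ k → y k - y j = ∑ i ∈ Finset.Ico j k, h • f (y i) := by
    intro k hk
    induction k, hk using Nat.le_induction with
    | base => simp
    | succ k hjk ih =>
      rw [Finset.sum_Ico_succ_top hjk, ← ih, hy]; abel
  have hs : ∑ i ∈ Finset.Ico j k, h = k * h - j * h := by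
    simp [Nat.cast_sub hjk.le]; ring
  have := hK.centerMass_mem (t := Finset.Ico j k) (w := fun _ => h) (z := fun i => f (y i))
    (fun _ _ => hh.le) (by
      rw [hs]
      have : (j:ℝ) < k := by exact_mod_cast hjk
      nlinarith) (fun i hi => by
        rw [Finset.mem_Ico] at hi; exact hm i hi.1 hi.2)
  rw [Finset.centerMass, hs, ← e k hjk.le] at this
  exact this
end euler

/-- If `H` has nonempty convex compact values, linear growth, and is upper
semicontinuous at every point, then for every initial condition `x₀` there exists an
absolutely continuous solution of the differential inclusion `ẋ(t) ∈ H(x(t))` on `ℝ₊`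
starting at `x₀`. -/
theorem existence_of_solutions {d : ℕ} (H : Ed d → Set (Ed d))
    (hval : ∀ x, (H x).Nonempty ∧ Convex ℝ (H x) ∧ IsCompact (H x))
    (hgrowth : ∃ C : ℝ, 0 ≤ C ∧ ∀ x, ∀ v ∈ H x, ‖v‖ ≤ C * (1 + ‖x‖))
    (husc : ∀ x, USCMapAt H x) :
    ∀ x₀ : Ed d, ∃ x : ℝ → Ed d, x 0 = x₀ ∧ IsSolutionOn H x := by
  classical
  obtain ⟨C, hC, hg⟩ := hgrowth
  choose f hf using fun x => (hval x).1
  have hfb : ∀ v, ‖f v‖ ≤ C * (1 + ‖v‖) := fun v => hg v _ (hf v)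
  intro x₀
  let h : ℕ → ℝ := fun n => 1 / ((n:ℝ) + 1)
  have hpos : ∀ n, 0 < h n := fun n => by positivity
  let y : ℕ → ℕ → Ed d := fun n k => Nat.rec x₀ (fun _ v => v + h n • f v) k
  have y0 : ∀ n, y n 0 = x₀ := fun n => rfl
  have hy : ∀ n k, y n (k+1) = y n k + h n • f (y n k) := fun n k => rfl
  let κ : ℕ → ℝ → ℕ := fun n t => ⌊|t| * ((n:ℝ) + 1)⌋₊
  let τ : ℕ → ℝ → ℝ := fun n t => κ n t * h n
  have hτle : ∀ n t, τ n t ≤ |t| := by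
    intro n t
    have : (κ n t : ℝ) ≤ |t| * ((n:ℝ) + 1) := Nat.floor_le (by positivity)
    have h1 : (0:ℝ) < (n:ℝ) + 1 := by positivity
    change (κ n t : ℝ) * (1 / ((n:ℝ) + 1)) ≤ |t|
    rw [mul_one_div, div_le_iff₀ h1]
    exact this
  have hκmono : ∀ n s t, 0 ≤ s → s ≤ t → κ n s ≤ κ n t := by
    intro n s t hs hst
    apply Nat.floor_le_floor
    rw [abs_of_nonneg hs, abs_of_nonneg (hs.trans hst)]
    gcongr
  let 𝒰 : Ultrafilter ℕ := hyperfilter ℕ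
  have h𝒰 : (𝒰 : Filter ℕ) ≤ atTop := Nat.hyperfilter_le_atTop
  have hτlim : ∀ t, 0 ≤ t → Tendsto (fun n => τ n t) 𝒰 (𝓝 t) := by
    intro t ht
    have h1 : Tendsto (fun n : ℕ => (n:ℝ) + 1) atTop atTop :=
      tendsto_atTop_add_const_right _ _ tendsto_natCast_atTop_atTop
    have h2 := ((tendsto_nat_floor_mul_div_atTop ht).comp h1).mono_left h𝒰
    refine h2.congr fun n => ?_
    simp only [Function.comp, τ, κ, h, abs_of_nonneg ht, mul_one_div]
  let M : ℝ → ℝ := fun T => C * (Real.exp (C * T) * (1 + ‖x₀‖))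
  have hM : ∀ T, 0 ≤ M T := fun T => by positivity
  have hlip : ∀ n T (j k : ℕ), j ≤ k → k * h n ≤ T → ‖y n k - y n j‖ ≤ M T * (k * h n - j * h n) := by
    intro n T j k hjk hk
    have := euler_lip hC (hpos n).le hfb (hy n) j k hjk hk
    rwa [y0] at this
  have hex : ∀ t, ∃ p, Tendsto (fun n => y n (κ n t)) 𝒰 (𝓝 p) := by
    intro t
    have hc := isCompact_closedBall (0 : Ed d) (Real.exp (C * |t|) * (1 + ‖x₀‖))
    obtain ⟨p, -, hp⟩ := hc.ultrafilter_le_nhds (𝒰.map fun n => y n (κ n t)) (by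
      rw [le_principal_iff, Ultrafilter.coe_map, Filter.mem_map]
      refine Filter.univ_mem' fun n => ?_
      have h1 := euler_bound hC (hpos n).le hfb (hy n) (κ n t)
      rw [y0] at h1
      have h2 : Real.exp (C * (κ n t * h n)) * (1 + ‖x₀‖) ≤ Real.exp (C * |t|) * (1 + ‖x₀‖) := by
        gcongr
        exact hτle n t
      show y n (κ n t) ∈ Metric.closedBall (0 : Ed d) (Real.exp (C * |t|) * (1 + ‖x₀‖))
      rw [mem_closedBall_zero_iff]
      linarith)
    exact ⟨p, hp⟩
  choose x hx using hex
  have hx0 : x 0 = x₀ := by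
    refine tendsto_nhds_unique (hx 0) ?_
    have : ∀ n, y n (κ n 0) = x₀ := by
      intro n
      have : κ n 0 = 0 := by simp [κ]
      rw [this, y0]
    simp only [this]
    exact tendsto_const_nhds
  have hxl : ∀ T s t, 0 ≤ s → s ≤ t → t ≤ T → ‖x t - x s‖ ≤ M T * (t - s) := by
    intro T s t hs hst htT
    refine le_of_tendsto_of_tendsto' ((hx t).sub (hx s)).norm
      (((hτlim t (hs.trans hst)).sub (hτlim s hs)).const_mul (M T)) fun n => ?_
    refine hlip n T _ _ (hκmono n s t hs hst) ((hτle n t).trans ?_)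
    rwa [abs_of_nonneg (hs.trans hst)]
  obtain ⟨hA, hB, hD⟩ := ftc_lip x (by
    intro T
    refine ⟨⟨M T, hM T⟩, LipschitzOnWith.of_dist_le_mul ?_⟩
    intro s hs t ht
    rcases le_total s t with hst | hst
    · rw [dist_comm, dist_comm s t, dist_eq_norm, Real.dist_eq, abs_of_nonneg (sub_nonneg.2 hst)]
      exact hxl T s t hs.1 hst ht.2
    · rw [dist_eq_norm, Real.dist_eq, abs_of_nonneg (sub_nonneg.2 hst)]
      exact hxl T t s ht.1 hst hs.2)
  refine ⟨x, hx0, deriv x, hA, hB, ?_⟩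
  filter_upwards [hD] with t ⟨ht0, htd⟩
  have hcl : IsClosed (H (x t)) := (hval (x t)).2.2.isClosed
  rw [← hcl.closure_eq, Metric.closure_eq_iInter_cthickening, mem_iInter₂]
  intro ε hε
  obtain ⟨δ, hδ, hU⟩ := husc (x t) (Metric.thickening ε (H (x t))) Metric.isOpen_thickening
    (Metric.self_subset_thickening hε _)
  have hKc : Convex ℝ (Metric.cthickening ε (H (x t))) := (hval (x t)).2.1.cthickening ε
  have hKcl : IsClosed (Metric.cthickening ε (H (x t))) := Metric.isClosed_cthickening
  have hslope := (hasDerivAt_iff_tendsto_slope.1 htd.hasDerivAt).mono_left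
    (nhdsWithin_mono t (fun r (hr : r ∈ Ioi t) => ne_of_gt hr))
  let m := M (t + 1)
  have hm : 0 ≤ m := hM _
  let η : ℝ := min 1 (δ / (2 * (m + 1)))
  have hη : 0 < η := by positivity
  refine hKcl.mem_of_tendsto hslope ?_
  filter_upwards [Ioo_mem_nhdsGT (show t < t + η by linarith)] with r hr
  have hr1 : r ≤ t + 1 := hr.2.le.trans (by have : η ≤ 1 := min_le_left _ _; linarith)
  have hr0 : 0 ≤ r := (ht0.trans hr.1).le
  have hmr : m * (r - t) < δ / 2 := by
    have h1 : r - t < δ / (2 * (m + 1)) := by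
      have : η ≤ δ / (2 * (m + 1)) := min_le_right _ _
      linarith [hr.2]
    rw [lt_div_iff₀ (by positivity)] at h1
    have : 0 < r - t := by linarith [hr.1]
    nlinarith
  have hsub := (hτlim r hr0).sub (hτlim t ht0.le)
  have hne : r - t ≠ 0 := by linarith [hr.1]
  have hlim := (hsub.inv₀ hne).smul ((hx r).sub (hx t))
  rw [slope_def_module]
  refine hKcl.mem_of_tendsto hlim ?_
  have ev1 : ∀ᶠ n in (𝒰 : Filter ℕ), 0 < τ n r - τ n t :=
    hsub.eventually (lt_mem_nhds (by linarith [hr.1]))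
  have ev2 : ∀ᶠ n in (𝒰 : Filter ℕ), m * (τ n r - τ n t) < δ / 2 :=
    (hsub.const_mul m).eventually (gt_mem_nhds hmr)
  have ev3 : ∀ᶠ n in (𝒰 : Filter ℕ), ‖y n (κ n t) - x t‖ < δ / 2 := by
    have := (hx t).eventually (Metric.ball_mem_nhds (x t) (half_pos hδ))
    filter_upwards [this] with n hn
    simpa [dist_eq_norm] using hn
  filter_upwards [ev1, ev2, ev3] with n h1 h2 h3
  have hlt : κ n t < κ n r := by
    by_contra hcon
    have h4 : (κ n r : ℝ) ≤ κ n t := by exact_mod_cast not_lt.1 hcon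
    have := mul_le_mul_of_nonneg_right h4 (hpos n).le
    change 0 < κ n r * h n - κ n t * h n at h1
    linarith
  refine euler_avg (hpos n) (hy n) hKc _ _ hlt fun i hi1 hi2 => ?_
  have hir : i * h n ≤ τ n r := by
    have h4 : (i : ℝ) ≤ κ n r := by exact_mod_cast hi2.le
    exact mul_le_mul_of_nonneg_right h4 (hpos n).le
  have hτr : τ n r ≤ t + 1 := ((hτle n r).trans_eq (abs_of_nonneg hr0)).trans hr1
  have h5 := hlip n (t + 1) _ _ hi1 (hir.trans hτr)
  have h6 : ‖y n i - y n (κ n t)‖ < δ / 2 := by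
    refine (h5.trans ?_).trans_lt h2
    change m * _ ≤ m * _
    gcongr
  have h7 : ‖y n i - x t‖ ≤ δ := by
    have := norm_add_le (y n i - y n (κ n t)) (y n (κ n t) - x t)
    rw [sub_add_sub_cancel] at this
    linarith
  exact Metric.thickening_subset_cthickening _ _ (hU _ h7 (hf _))


end
end

section
/- Let X ⊆ ℝ^d be a convex set and let x : [0,1] → ℝ^d be an absolutely continuous curve with x(t) ∈ X for every t ∈ [0,1]. Then for almost every t ∈ [0,1], ⟨v, ẋ(t)⟩ = 0 for every v in the normal cone N_X(x(t)). -/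
open MeasureTheory Filter Set RealInnerProductSpace

noncomputable section

/-- The normal cone of a (convex) set `X` at `x`. -/
def normalCone {d : ℕ} (X : Set (Ed d)) (x : Ed d) : Set (Ed d) :=
  {v | ∀ y ∈ X, ⟪v, y - x⟫ ≤ (0 : ℝ)}

/-- If `X ⊆ ℝ^d` is convex and `x : [0,1] → ℝ^d` is an absolutely continuous
curve (with a.e. derivative `u`) remaining in `X`, then for a.e. `t ∈ [0,1]`,
`⟪v, ẋ(t)⟫ = 0` for every `v` in the normal cone `N_X(x(t))`. -/
theorem normal_cone_orthogonal_to_velocity {d : ℕ} (X : Set (Ed d)) (hX : Convex ℝ X)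
    (x u : ℝ → Ed d) (hu : IntegrableOn u (Icc (0:ℝ) 1))
    (hx : ∀ t ∈ Icc (0:ℝ) 1, x t = x 0 + ∫ s in (0:ℝ)..t, u s)
    (hxX : ∀ t ∈ Icc (0:ℝ) 1, x t ∈ X) :
    ∀ᵐ t ∂(volume.restrict (Icc (0:ℝ) 1)),
      ∀ v ∈ normalCone X (x t), ⟪v, u t⟫ = (0:ℝ) := by
  have hii : IntervalIntegrable u volume 0 1 :=
    (intervalIntegrable_iff_integrableOn_Icc_of_le zero_le_one).2 hu
  rw [ae_restrict_iff' measurableSet_Icc]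
  have h₁ : ∀ᵐ t : ℝ, t ≠ 0 := by simp [ae_iff, measure_singleton]
  have h₂ : ∀ᵐ t : ℝ, t ≠ 1 := by simp [ae_iff, measure_singleton]
  filter_upwards [hii.ae_hasDerivAt_integral, h₁, h₂] with t ht h0 h1 htI v hv
  have hnhds : Icc (0:ℝ) 1 ∈ nhds t :=
    Icc_mem_nhds (lt_of_le_of_ne htI.1 (Ne.symm h0)) (lt_of_le_of_ne htI.2 h1)
  rw [uIcc_of_le zero_le_one] at ht
  have hd := ht htI 0 (by simp)
  have hdx : HasDerivAt x (u t) t := by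
    refine (hd.const_add (x 0)).congr_of_eventuallyEq ?_
    filter_upwards [hnhds] with s hs using hx s hs
  have hdv : HasDerivAt (fun s => (inner ℝ v (x s) : ℝ)) (inner ℝ v (u t)) t := by
    simpa using (hasDerivAt_const t v).inner ℝ hdx
  have hmax : IsLocalMax (fun s => (inner ℝ v (x s) : ℝ)) t := by
    filter_upwards [hnhds] with s hs
    have := hv (x s) (hxX s hs)
    rw [inner_sub_right] at this
    linarith
  exact hmax.hasDerivAt_eq_zero hdv

end
end

section
/- Let f, g : ℝ^d → ℝ be locally Lipschitz and path differentiable, let X ⊆ ℝ^d be a closed convex set, and let x : ℝ₊ → ℝ^d be a solution of the differential inclusion ẋ(t) ∈ −∂f(x(t)) − ∂g(x(t)) − N_X(x(t)) which remains in X. Then for every t ≥ 0, (f+g)(x(t)) − (f+g)(x(0)) = −∫₀ᵗ ‖ẋ(u)‖² du. Consequently, if x(0) ∉ Z = {x : 0 ∈ ∂f(x) + ∂g(x) + N_X(x)}, then (f+g)(x(t)) < (f+g)(x(0)) for every t > 0; in other words, f+g is a strict Lyapunov function for this differential inclusion and the set Z. -/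
open MeasureTheory Filter Set RealInnerProductSpace

noncomputable section

/-- The Clarke subdifferential of `F` at `x`. -/
def clarke {d : ℕ} (F : Ed d → ℝ) (x : Ed d) : Set (Ed d) :=
  convexHull ℝ {v | ∃ xs : ℕ → Ed d, (∀ n, DifferentiableAt ℝ F (xs n)) ∧
    Tendsto xs atTop (nhds x) ∧ Tendsto (fun n => gradient F (xs n)) atTop (nhds v)}

/-- Path differentiability of a function `F : ℝ^d → ℝ`. -/
def PathDifferentiable {d : ℕ} (F : Ed d → ℝ) : Prop :=
  ∀ x u : ℝ → Ed d, IntegrableOn u (Icc (0:ℝ) 1) →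
    (∀ t ∈ Icc (0:ℝ) 1, x t = x 0 + ∫ s in (0:ℝ)..t, u s) →
    ∀ᵐ t ∂(volume.restrict (Icc (0:ℝ) 1)),
      ∀ v ∈ clarke F (x t), HasDerivAt (fun s => F (x s)) (⟪v, u t⟫) t

/-- The set-valued map `p ↦ −∂f(p) − ∂g(p) − N_X(p)`. -/
def DImap {d : ℕ} (f g : Ed d → ℝ) (X : Set (Ed d)) (p : Ed d) : Set (Ed d) :=
  {w | ∃ a ∈ clarke f p, ∃ b ∈ clarke g p, ∃ c ∈ normalCone X p, w = -a - b - c}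

/-- The Clarke critical set `Z = {x : 0 ∈ ∂f(x) + ∂g(x) + N_X(x)}`. -/
def critSet {d : ℕ} (f g : Ed d → ℝ) (X : Set (Ed d)) : Set (Ed d) :=
  {p | ∃ a ∈ clarke f p, ∃ b ∈ clarke g p, ∃ c ∈ normalCone X p, a + b + c = 0}

lemma aux_ac {h N : ℝ → ℝ} {K a b : ℝ} (hN : AbsolutelyContinuousOnInterval N a b)
    (hh : ∀ s ∈ uIcc a b, ∀ t ∈ uIcc a b, dist (h s) (h t) ≤ K * dist (N s) (N t)) :
    AbsolutelyContinuousOnInterval h a b := by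
  have h1 := Tendsto.const_mul K hN
  rw [mul_zero] at h1
  refine tendsto_of_tendsto_of_tendsto_of_le_of_le' tendsto_const_nhds h1
    (Eventually.of_forall fun E => Finset.sum_nonneg fun _ _ => dist_nonneg) ?_
  refine Filter.mem_inf_of_right ?_
  intro E hE
  simp only [mem_ofPred_eq, Finset.mul_sum]
  refine Finset.sum_le_sum fun i hi => ?_
  exact hh _ (hE.1 i hi).1 _ (hE.1 i hi).2

lemma aux_chain {d : ℕ} {F : Ed d → ℝ} (hF : PathDifferentiable F) {x u : ℝ → Ed d} {T : ℝ}
    (hT : 0 < T) (hu : IntervalIntegrable u volume 0 T)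
    (hx : ∀ t ∈ Ici (0:ℝ), x t = x 0 + ∫ s in (0:ℝ)..t, u s) :
    ∀ᵐ t : ℝ, t ∈ Icc 0 T → ∀ v ∈ clarke F (x t), HasDerivAt (fun s => F (x s)) (⟪v, u t⟫) t := by
  have hi : IntegrableOn (fun s => T • u (T * s)) (Icc (0:ℝ) 1) := by
    have := (hu.comp_mul_left (c := T)).smul T
    simp only [zero_div, div_self hT.ne'] at this
    rw [intervalIntegrable_iff_integrableOn_Icc_of_le zero_le_one] at this
    exact this
  have h := hF (fun s => x (T * s)) (fun s => T • u (T * s)) hi (by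
    intro t ht
    rw [hx (T * t) (mul_nonneg hT.le ht.1)]
    simp [intervalIntegral.integral_smul, intervalIntegral.smul_integral_comp_mul_left])
  rw [ae_restrict_iff' measurableSet_Icc] at h
  have hq : Measure.QuasiMeasurePreserving (fun t : ℝ => T⁻¹ * t) volume volume := by
    refine ⟨by fun_prop, ?_⟩
    rw [Real.map_volume_mul_left (inv_ne_zero hT.ne')]
    exact Measure.smul_absolutelyContinuous
  filter_upwards [hq.ae h] with t ht htI v hv
  have e : T * (T⁻¹ * t) = t := by field_simp
  have h1 : T⁻¹ * t ∈ Icc (0:ℝ) 1 := by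
    refine ⟨mul_nonneg (inv_nonneg.2 hT.le) htI.1, ?_⟩
    rw [inv_mul_le_iff₀ hT]; linarith [htI.2]
  have h2 := ht h1 v (by rw [e]; exact hv)
  have h3 := HasDerivAt.comp t h2 ((hasDerivAt_id t).const_mul T⁻¹)
  rw [e, real_inner_smul_right] at h3
  have e2 : ∀ s, T * (T⁻¹ * s) = s := fun s => by field_simp
  have e3 : (fun s => F (x s)) = (fun s => F (x (T * s))) ∘ HMul.hMul T⁻¹ := by
    funext s; simp [e2]
  have e4 : (⟪v, u t⟫ : ℝ) = T * ⟪v, u t⟫ * (T⁻¹ * 1) := by field_simp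
  rw [e3, e4]
  exact h3

lemma aux_lip {d : ℕ} {F : Ed d → ℝ} (hF : LocallyLipschitz F) {x u : ℝ → Ed d} {T : ℝ}
    (hT : 0 < T) (hu : IntervalIntegrable u volume 0 T)
    (hx : ∀ t ∈ Ici (0:ℝ), x t = x 0 + ∫ s in (0:ℝ)..t, u s) :
    AbsolutelyContinuousOnInterval (fun t => F (x t)) 0 T := by
  have hc : ContinuousOn x (uIcc 0 T) := by
    have := intervalIntegral.continuousOn_primitive_interval' hu (left_mem_uIcc)
    refine (continuousOn_const (c := x 0) |>.add this).congr fun t ht => ?_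
    rw [uIcc_of_le hT.le] at ht
    exact hx t ht.1
  obtain ⟨K, hK⟩ := (hF.locallyLipschitzOn (s := x '' uIcc 0 T)).exists_lipschitzOnWith_of_compact
    (isCompact_uIcc.image_of_continuousOn hc)
  refine aux_ac (K := K) (hu.norm.absolutelyContinuousOnInterval_intervalIntegral
    (c := 0) left_mem_uIcc) ?_
  intro s hs t ht
  refine (hK.dist_le_mul _ (mem_image_of_mem x hs) _ (mem_image_of_mem x ht)).trans ?_
  refine mul_le_mul_of_nonneg_left ?_ K.2
  have hs0 := hu.mono_set (uIcc_subset_uIcc left_mem_uIcc hs)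
  have ht0 := hu.mono_set (uIcc_subset_uIcc left_mem_uIcc ht)
  rw [uIcc_of_le hT.le] at hs ht
  rw [hx s hs.1, hx t ht.1, dist_add_left, dist_eq_norm, Real.dist_eq,
    intervalIntegral.integral_interval_sub_left hs0 ht0,
    intervalIntegral.integral_interval_sub_left hs0.norm ht0.norm]
  exact intervalIntegral.norm_integral_le_abs_integral_norm

lemma aux_normal {d : ℕ} {X : Set (Ed d)} {x : ℝ → Ed d} {t : ℝ} (ht : 0 < t) {w c : Ed d}
    (hxX : ∀ t ∈ Ici (0:ℝ), x t ∈ X) (hc : c ∈ normalCone X (x t)) (hd : HasDerivAt x w t) :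
    ⟪c, w⟫ = (0:ℝ) := by
  have h1 : HasDerivAt (fun s => (⟪c, x s - x t⟫ : ℝ)) (⟪c, w⟫) t := by
    have := (hasDerivAt_const t c).inner ℝ (hd.sub_const (x t))
    simpa using this
  refine IsLocalMax.hasDerivAt_eq_zero ?_ h1
  filter_upwards [Ioi_mem_nhds ht] with s hs
  simpa using hc (x s) (hxX s (mem_Ici.2 (le_of_lt (mem_Ioi.1 hs))))

lemma aux_main {d : ℕ} (f g : Ed d → ℝ)
    (hf : LocallyLipschitz f) (hg : LocallyLipschitz g)
    (hfp : PathDifferentiable f) (hgp : PathDifferentiable g)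
    (X : Set (Ed d))
    (x u : ℝ → Ed d) (hu : LocallyIntegrableOn u (Ici (0:ℝ)))
    (hx : ∀ t ∈ Ici (0:ℝ), x t = x 0 + ∫ s in (0:ℝ)..t, u s)
    (hsol : ∀ᵐ t ∂(volume.restrict (Ici (0:ℝ))), u t ∈ DImap f g X (x t))
    (hxX : ∀ t ∈ Ici (0:ℝ), x t ∈ X) {T : ℝ} (hT : 0 < T) :
    IntervalIntegrable (fun s => ‖u s‖^2) volume 0 T ∧
      (f (x T) + g (x T)) - (f (x 0) + g (x 0)) = -∫ s in (0:ℝ)..T, ‖u s‖^2 := by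
  have hui : IntervalIntegrable u volume 0 T := by
    rw [intervalIntegrable_iff_integrableOn_Icc_of_le hT.le]
    exact hu.integrableOn_compact_subset Icc_subset_Ici_self isCompact_Icc
  have hac := (aux_lip hf hT hui hx).add (aux_lip hg hT hui hx)
  rw [ae_restrict_iff' measurableSet_Ici] at hsol
  have h0 : ∀ᵐ t : ℝ, t ≠ 0 := by simp [ae_iff, measure_singleton]
  have key : ∀ᵐ t : ℝ, t ∈ uIoc 0 T →
      deriv ((fun t => f (x t)) + (fun t => g (x t))) t = -‖u t‖^2 := by
    filter_upwards [aux_chain hfp hT hui hx, aux_chain hgp hT hui hx, hsol,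
      hui.ae_hasDerivAt_integral] with t h1 h2 h3 h4 ht
    rw [uIoc_of_le hT.le] at ht
    have htI : t ∈ Icc 0 T := Ioc_subset_Icc_self ht
    obtain ⟨a, ha, b, hb, c, hc, e⟩ := h3 htI.1
    have hdx : HasDerivAt x (u t) t := by
      have := (h4 (by rwa [uIcc_of_le hT.le]) 0 left_mem_uIcc).const_add (x 0)
      refine this.congr_of_eventuallyEq ?_
      filter_upwards [Ioi_mem_nhds ht.1] with s hs
      exact hx s (mem_Ici.2 (le_of_lt (mem_Ioi.1 hs)))
    have hn := aux_normal ht.1 hxX hc hdx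
    rw [((h1 htI a ha).add (h2 htI b hb)).deriv, ← real_inner_self_eq_norm_sq]
    have : (⟪u t, u t⟫ : ℝ) = ⟪-a - b - c, u t⟫ := by rw [← e]
    rw [this, inner_sub_left, inner_sub_left, inner_neg_left, hn]
    ring
  have hint := hac.intervalIntegrable_deriv
  have hFTC := hac.integral_deriv_eq_sub
  constructor
  · have := hint.neg
    refine this.congr_ae ?_
    rw [Filter.EventuallyEq, ae_restrict_iff' measurableSet_uIoc]
    filter_upwards [key] with t ht htI
    simp [ht htI]
  · rw [intervalIntegral.integral_congr_ae key, intervalIntegral.integral_neg] at hFTC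
    rw [hFTC]; simp

/-- For `f, g` locally Lipschitz and path differentiable, `X` closed convex and
`x` an absolutely continuous solution (with a.e. derivative `u`) of
`ẋ(t) ∈ −∂f(x(t)) − ∂g(x(t)) − N_X(x(t))` remaining in `X`, one has
`(f+g)(x(t)) − (f+g)(x(0)) = −∫₀ᵗ ‖ẋ(s)‖² ds` for every `t ≥ 0`; consequently, if
`x(0) ∉ Z` then `(f+g)(x(t)) < (f+g)(x(0))` for every `t > 0` (`f+g` is a strict Lyapunov
function for this differential inclusion and the set `Z`). -/
theorem energy_identity_strict_lyapunov {d : ℕ} (f g : Ed d → ℝ)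
    (hf : LocallyLipschitz f) (hg : LocallyLipschitz g)
    (hfp : PathDifferentiable f) (hgp : PathDifferentiable g)
    (X : Set (Ed d)) (hXcl : IsClosed X) (hXcv : Convex ℝ X)
    (x u : ℝ → Ed d) (hu : LocallyIntegrableOn u (Ici (0:ℝ)))
    (hx : ∀ t ∈ Ici (0:ℝ), x t = x 0 + ∫ s in (0:ℝ)..t, u s)
    (hsol : ∀ᵐ t ∂(volume.restrict (Ici (0:ℝ))), u t ∈ DImap f g X (x t))
    (hxX : ∀ t ∈ Ici (0:ℝ), x t ∈ X) :
    (∀ t ∈ Ici (0:ℝ),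
      (f (x t) + g (x t)) - (f (x 0) + g (x 0)) = -∫ s in (0:ℝ)..t, ‖u s‖^2) ∧
    (x 0 ∉ critSet f g X → ∀ t > (0:ℝ), f (x t) + g (x t) < f (x 0) + g (x 0)) := by
  have hmain := fun {T : ℝ} (hT : 0 < T) => aux_main f g hf hg hfp hgp X x u hu hx hsol hxX hT
  refine ⟨fun t ht => ?_, fun h0 t ht => ?_⟩
  · rcases eq_or_lt_of_le (show (0:ℝ) ≤ t from ht) with rfl | h
    · simp
    · exact (hmain h).2
  · obtain ⟨hi, he⟩ := hmain ht
    by_contra! hcon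
    have hnn : 0 ≤ ∫ s in (0:ℝ)..t, ‖u s‖^2 :=
      intervalIntegral.integral_nonneg ht.le fun _ _ => by positivity
    have hz : ∫ s in (0:ℝ)..t, ‖u s‖^2 = 0 := by linarith
    rw [intervalIntegral.integral_eq_zero_iff_of_le_of_nonneg_ae ht.le
      (Eventually.of_forall fun _ => by positivity) hi] at hz
    have hz' : ∀ᵐ s : ℝ, s ∈ Ioc 0 t → u s = 0 := by
      rw [Filter.EventuallyEq, ae_restrict_iff' measurableSet_Ioc] at hz
      filter_upwards [hz] with s hs hs'
      simpa using hs hs'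
    have hconst : ∀ s ∈ Ioc 0 t, x s = x 0 := by
      intro s hs
      rw [hx s hs.1.le, intervalIntegral.integral_zero_ae, add_zero]
      filter_upwards [hz'] with r hr hrs
      rw [uIoc_of_le hs.1.le] at hrs
      exact hr ⟨hrs.1, hrs.2.trans hs.2⟩
    rw [ae_restrict_iff' measurableSet_Ici] at hsol
    have hfalse : ∀ᵐ s : ℝ, s ∉ Ioc 0 t := by
      filter_upwards [hz', hsol] with s h1 h2 hs
      obtain ⟨a, ha, b, hb, c, hc, e⟩ := h2 hs.1.le
      rw [hconst s hs] at ha hb hc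
      refine h0 ⟨a, ha, b, hb, c, hc, ?_⟩
      rw [h1 hs] at e
      have : a + b + c = -(-a - b - c) := by abel
      rw [this, ← e, neg_zero]
    rw [← measure_eq_zero_iff_ae_notMem, Real.volume_Ioc] at hfalse
    simp at hfalse
    linarith

end
end
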